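/- arXiv:2004.10903 — 2 statements merged into one kernel-verified Lean document; each statement's English description precedes it below -/
import Mathlib

section
/- Let A, B ∈ M₃(ℂ) be such that A is normal, the operator norm of B on Euclidean ℂ³ equals 1, and {(x,y,z) ∈ ℂ³ : det(x·A + y·B + z·AB − I) = 0} = {(x,y,z) ∈ ℂ³ : x³ + y³ + z³ = 1}. Let A₃ = diag(1, e^{2πi/3}, e^{4πi/3}). Then there exists a unitary U ∈ M₃(ℂ) such that either (U A Uᴴ, U B Uᴴ) = (A₃, [[0,1,0],[0,0,1],[1,0,0]]) or (U A Uᴴ, U B Uᴴ) = (A₃, [[0,0,1],[1,0,0],[0,1,0]]). -/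
open Matrix Complex

noncomputable section

theorem aux_det (M : Matrix (Fin 3) (Fin 3) ℂ) (t : ℂ) :
    (t • M - 1).det = -1 + M.trace * t + (-(M.trace ^ 2 - (M * M).trace) / 2) * t ^ 2
      + M.det * t ^ 3 := by
  simp [Matrix.det_fin_three, Matrix.trace, Fin.sum_univ_three, Matrix.mul_apply, Matrix.one_apply]
  ring

theorem aux_omega (w : ℂ) (h3 : w ^ 3 = 1) (h1 : w ≠ 1) : 1 + w + w ^ 2 = 0 := by
  have : (w - 1) * (1 + w + w ^ 2) = 0 := by linear_combination h3
  rcases mul_eq_zero.1 this with h | h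
  · exact absurd (sub_eq_zero.1 h) h1
  · exact h

theorem aux_cubic (w : ℂ) (h3 : w ^ 3 = 1) (h1 : w ≠ 1) (a b c s : ℂ)
    (h : ∀ t : ℂ, -1 + a * t + b * t ^ 2 + c * t ^ 3 = 0 ↔ s * t ^ 3 = 1) :
    a = 0 ∧ b = 0 ∧ c = s := by
  have hw := aux_omega w h3 h1
  by_cases hs : s = 0
  · subst hs
    have hno : ∀ t : ℂ, -1 + a * t + b * t ^ 2 + c * t ^ 3 ≠ 0 := by
      intro t ht
      have := (h t).1 ht
      simp at this
    let p : Polynomial ℂ := Polynomial.C (-1) + Polynomial.C a * Polynomial.X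
      + Polynomial.C b * Polynomial.X ^ 2 + Polynomial.C c * Polynomial.X ^ 3
    have hp : p.degree = 0 := by
      by_contra hd
      obtain ⟨t, ht⟩ := IsAlgClosed.exists_root p hd
      apply hno t
      simpa [p, Polynomial.IsRoot] using ht
    have hc := Polynomial.eq_C_of_degree_eq_zero hp
    have ev : ∀ t : ℂ, -1 + a * t + b * t ^ 2 + c * t ^ 3 = p.coeff 0 := by
      intro t
      have := congrArg (Polynomial.eval t) hc
      simpa [p] using this
    have e0 := ev 0
    have e1 := ev 1
    have e2 := ev (-1)
    have e3 := ev 2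
    refine ⟨?_, ?_, ?_⟩
    · linear_combination (-1/2) * e0 + e1 - (1/3) * e2 - (1/6) * e3
    · linear_combination (-1) * e0 + (1/2) * e1 + (1/2) * e2
    · linear_combination (1/2) * e0 - (1/2) * e1 - (1/6) * e2 + (1/6) * e3
  · obtain ⟨t, ht⟩ := IsAlgClosed.exists_pow_nat_eq (s⁻¹) (n := 3) (by norm_num)
    have ht3 : s * t ^ 3 = 1 := by rw [ht]; field_simp
    have ht0 : t ≠ 0 := by rintro rfl; simp at ht3
    have e0 := (h t).2 ht3
    have e1 := (h (w * t)).2 (by rw [mul_pow, h3, one_mul]; exact ht3)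
    have e2 := (h (w ^ 2 * t)).2 (by linear_combination ht3 + s * t ^ 3 * (w ^ 3 + 1) * h3)
    have hw4 : w ^ 4 = w := by linear_combination w * h3
    have hw6 : w ^ 6 = 1 := by linear_combination (w ^ 3 + 1) * h3
    have e1' : -1 + a * t * w + b * t ^ 2 * w ^ 2 + c * t ^ 3 = 0 := by
      linear_combination e1 - c * t ^ 3 * h3
    have e2' : -1 + a * t * w ^ 2 + b * t ^ 2 * w + c * t ^ 3 = 0 := by
      linear_combination e2 - c * t ^ 3 * hw6 - b * t ^ 2 * hw4
    have hr : c * t ^ 3 = 1 := by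
      linear_combination (1/3) * (e0 + e1' + e2') - (1/3) * (a * t + b * t ^ 2) * hw
    have hp : a * t = 0 := by
      linear_combination (1/3) * (e0 + w ^ 2 * e1' + w * e2')
        - (1/3) * (c * t ^ 3 - 1) * hw - (1/3) * 2 * a * t * h3
        - (1/3) * b * t ^ 2 * (hw + hw4)
    have hq : b * t ^ 2 = 0 := by linear_combination e0 - hp - hr
    have ht2 : t ^ 2 ≠ 0 := pow_ne_zero _ ht0
    have htt : t ^ 3 ≠ 0 := pow_ne_zero _ ht0
    refine ⟨by simpa [ht0] using hp, by simpa [ht0] using hq, ?_⟩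
    exact mul_right_cancel₀ htt (hr.trans ht3.symm)

open scoped ComplexOrder in
/-- A contraction of determinant one is unitary. -/
theorem aux_unitary (B : Matrix (Fin 3) (Fin 3) ℂ)
    (hB : ‖Matrix.toEuclideanCLM (𝕜 := ℂ) B‖ = 1) (hd : B.det = 1) : Bᴴ * B = 1 := by
  have hH : (Bᴴ * B).PosSemidef := Matrix.posSemidef_conjTranspose_mul_self B
  have hh := hH.isHermitian
  have hle : ∀ i, hh.eigenvalues i ≤ 1 := by
    intro i
    have h1 := hh.mulVec_eigenvectorBasis i
    set v := hh.eigenvectorBasis i with hv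
    have hn : ‖v‖ = 1 := hh.eigenvectorBasis.orthonormal.1 i
    have h2 : ‖Matrix.toEuclideanCLM (𝕜 := ℂ) B v‖ ≤ 1 := by
      have := (Matrix.toEuclideanCLM (𝕜 := ℂ) B).le_opNorm v
      rwa [hB, hn, one_mul] at this
    have h3 : ((‖Matrix.toEuclideanCLM (𝕜 := ℂ) B v‖ ^ 2 : ℝ) : ℂ) = hh.eigenvalues i := by
      have e1 : ((‖Matrix.toEuclideanCLM (𝕜 := ℂ) B v‖ ^ 2 : ℝ) : ℂ)
          = star (B *ᵥ v.ofLp) ⬝ᵥ (B *ᵥ v.ofLp) := by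
        push_cast
        have := inner_self_eq_norm_sq_to_K (𝕜 := ℂ) (Matrix.toEuclideanCLM (𝕜 := ℂ) B v)
        rw [EuclideanSpace.inner_eq_star_dotProduct] at this
        rw [dotProduct_comm]
        simpa using this.symm
      have e2 : star v.ofLp ⬝ᵥ v.ofLp = 1 := by
        have := inner_self_eq_norm_sq_to_K (𝕜 := ℂ) v
        rw [EuclideanSpace.inner_eq_star_dotProduct, hn] at this
        rw [dotProduct_comm]
        simpa using this
      rw [e1, star_mulVec, ← dotProduct_mulVec, mulVec_mulVec, h1, dotProduct_smul, e2]
      simp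
    have h4 : ‖Matrix.toEuclideanCLM (𝕜 := ℂ) B v‖ ^ 2 = hh.eigenvalues i := by exact_mod_cast h3
    rw [← h4]
    exact pow_le_one₀ (norm_nonneg _) h2
  have hge : ∀ i, 0 ≤ hh.eigenvalues i := hH.eigenvalues_nonneg
  have hprod : ∏ i, hh.eigenvalues i = 1 := by
    have := hh.det_eq_prod_eigenvalues
    rw [det_mul, det_conjTranspose, hd] at this
    simp only [star_one, one_mul] at this
    have h : ((∏ i, hh.eigenvalues i : ℝ) : ℂ) = 1 := by push_cast; exact this.symm
    exact_mod_cast h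
  have hone : ∀ i, hh.eigenvalues i = 1 := by
    rw [Fin.prod_univ_three] at hprod
    have a0 := hle 0
    have a1 := hle 1
    have a2 := hle 2
    have b0 := hge 0
    have b1 := hge 1
    have b2 := hge 2
    have c01 := mul_le_one₀ a0 b1 a1
    have c01' := mul_nonneg b0 b1
    have z2 : hh.eigenvalues 2 = 1 := by nlinarith
    have z01 : hh.eigenvalues 0 * hh.eigenvalues 1 = 1 := by nlinarith
    have z0 : hh.eigenvalues 0 = 1 := by nlinarith
    have z1 : hh.eigenvalues 1 = 1 := by nlinarith
    intro i
    fin_cases i <;> assumption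
  have hs := hh.spectral_theorem
  have hdg : (diagonal (RCLike.ofReal ∘ hh.eigenvalues) : Matrix (Fin 3) (Fin 3) ℂ) = 1 := by
    rw [← diagonal_one]
    congr 1
    funext i
    simp [hone i]
  rw [hdg, map_one] at hs
  exact hs

open scoped ComplexOrder in
theorem aux_eig (A : Matrix (Fin 3) (Fin 3) ℂ) (hA : A * Aᴴ = Aᴴ * A) (l : ℂ) (hl : l ^ 3 = 1)
    (hd : (l ^ 2 • A - 1).det = 0) :
    ∃ v : Fin 3 → ℂ, star v ⬝ᵥ v = 1 ∧ A *ᵥ v = l • v ∧ Aᴴ *ᵥ v = star l • v := by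
  obtain ⟨v, hv0, hv⟩ := Matrix.exists_mulVec_eq_zero_iff.2 hd
  have h1 : A *ᵥ v = l • v := by
    rw [sub_mulVec, smul_mulVec, one_mulVec, sub_eq_zero] at hv
    rw [← hv, smul_smul, ← pow_succ', hl, one_smul, hv]
  have h2 : Aᴴ *ᵥ v = star l • v := by
    have hN : (A - l • 1) *ᵥ v = 0 := by
      rw [sub_mulVec, smul_mulVec, one_mulVec, h1, sub_self]
    have hc : (A - l • 1) * (A - l • 1)ᴴ = (A - l • 1)ᴴ * (A - l • 1) := by
      simp only [conjTranspose_sub, conjTranspose_smul, conjTranspose_one, mul_sub, sub_mul, hA,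
        smul_mul_assoc, mul_smul_comm, one_mul, mul_one, smul_sub]
      rw [smul_comm l (star l)]
      abel
    have hz : (A - l • 1)ᴴ *ᵥ v = 0 := by
      rw [← dotProduct_star_self_eq_zero, star_mulVec, conjTranspose_conjTranspose,
        ← dotProduct_mulVec, mulVec_mulVec, hc, ← mulVec_mulVec, hN]
      simp
    rw [conjTranspose_sub, conjTranspose_smul, conjTranspose_one, sub_mulVec, smul_mulVec,
      one_mulVec, sub_eq_zero] at hz
    exact hz
  set r : ℝ := ‖(WithLp.toLp 2 v : EuclideanSpace ℂ (Fin 3))‖ with hr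
  have hr0 : (r : ℂ) ≠ 0 := by
    have : r ≠ 0 := by
      rw [hr, norm_ne_zero_iff]
      intro h
      exact hv0 (by simpa using h)
    exact_mod_cast this
  have hvv : star v ⬝ᵥ v = (r : ℂ) ^ 2 := by
    have := inner_self_eq_norm_sq_to_K (𝕜 := ℂ) (WithLp.toLp 2 v : EuclideanSpace ℂ (Fin 3))
    rw [EuclideanSpace.inner_eq_star_dotProduct] at this
    rw [dotProduct_comm]
    simpa using this
  refine ⟨(r : ℂ)⁻¹ • v, ?_, ?_, ?_⟩
  · rw [star_smul, smul_dotProduct, dotProduct_smul, hvv]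
    simp
    field_simp
  · rw [mulVec_smul, h1, smul_comm]
  · rw [mulVec_smul, h2, smul_comm]

/-- Eigenvectors of a normal matrix for distinct eigenvalues are orthogonal. -/
theorem aux_orth (A : Matrix (Fin 3) (Fin 3) ℂ) (v u : Fin 3 → ℂ) (l m : ℂ) (hlm : l ≠ m)
    (hv : Aᴴ *ᵥ v = star l • v) (hu : A *ᵥ u = m • u) : star v ⬝ᵥ u = 0 := by
  have h1 : star v ⬝ᵥ (A *ᵥ u) = m * (star v ⬝ᵥ u) := by rw [hu, dotProduct_smul, smul_eq_mul]
  have h2 : star v ⬝ᵥ (A *ᵥ u) = l * (star v ⬝ᵥ u) := by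
    rw [dotProduct_mulVec]
    have : star v ᵥ* A = l • star v := by
      have := congrArg star hv
      rw [star_mulVec, conjTranspose_conjTranspose, star_smul, star_star] at this
      exact this
    rw [this, smul_dotProduct, smul_eq_mul]
  have : (l - m) * (star v ⬝ᵥ u) = 0 := by rw [sub_mul, ← h1, ← h2, sub_self]
  exact (mul_eq_zero.1 this).resolve_left (sub_ne_zero.2 hlm)

theorem aux_diag (A : Matrix (Fin 3) (Fin 3) ℂ) (hA : A * Aᴴ = Aᴴ * A) (d : Fin 3 → ℂ)
    (hinj : Function.Injective d)
    (hl : ∀ i, d i ^ 3 = 1) (hd : ∀ i, (d i ^ 2 • A - 1).det = 0) :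
    ∃ U : Matrix (Fin 3) (Fin 3) ℂ, U * Uᴴ = 1 ∧ U * A * Uᴴ = diagonal d := by
  choose v hv1 hv2 hv3 using fun i => aux_eig A hA (d i) (hl i) (hd i)
  have hUU : ∀ i j, star (v i) ⬝ᵥ v j = if i = j then 1 else 0 := by
    intro i j
    split_ifs with h
    · rw [h]; exact hv1 j
    · exact aux_orth A _ _ _ _ (fun e => h (hinj e)) (hv3 i) (hv2 j)
  refine ⟨Matrix.of fun i => star (v i), ?_, ?_⟩
  · ext i j
    rw [one_apply, ← hUU i j]
    simp [Matrix.mul_apply, dotProduct]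
  · ext i j
    rw [Matrix.mul_assoc]
    have : ((Matrix.of fun i => star (v i)) * (A * (Matrix.of fun i => star (v i))ᴴ)) i j
        = star (v i) ⬝ᵥ (A *ᵥ v j) := by
      simp [Matrix.mul_apply, dotProduct, mulVec]
    rw [this, hv2, dotProduct_smul, hUU, diagonal_apply]
    split_ifs with h
    · simp [h]
    · simp

theorem aux_final (C : Matrix (Fin 3) (Fin 3) ℂ) (hC : C * Cᴴ = 1) (hdet : C.det = 1)
    (h00 : C 0 0 = 0) (h11 : C 1 1 = 0) (h22 : C 2 2 = 0) :
    ∃ d : Fin 3 → ℂ, (∀ i, d i * star (d i) = 1) ∧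
      (diagonal d * C * (diagonal d)ᴴ = !![0,1,0; 0,0,1; 1,0,0] ∨
       diagonal d * C * (diagonal d)ᴴ = !![0,0,1; 1,0,0; 0,1,0]) := by
  have e : ∀ i j, C i 0 * star (C j 0) + C i 1 * star (C j 1) + C i 2 * star (C j 2)
      = if i = j then 1 else 0 := by
    intro i j
    rw [← one_apply, ← hC]
    simp [Matrix.mul_apply, Fin.sum_univ_three]
  have e00 := e 0 0
  have e11 := e 1 1
  have e22 := e 2 2
  have e01 := e 0 1
  have e02 := e 0 2
  have e12 := e 1 2
  rw [det_fin_three] at hdet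
  simp only [h00, h11, h22, star_zero, mul_zero, zero_mul, add_zero, zero_add, if_true, sub_zero,
    zero_sub] at e00 e11 e22 e01 e02 e12 hdet
  rw [if_neg (by decide)] at e01 e02 e12
  rw [mul_eq_zero, star_eq_zero] at e01 e02 e12
  by_cases hb : C 0 2 = 0
  · have ha : C 0 1 ≠ 0 := by intro h; simp [h, hb] at e00
    have hf : C 2 1 = 0 := by tauto
    have he : C 2 0 ≠ 0 := by intro h; simp [h, hf] at e22
    have hc : C 1 0 = 0 := by tauto
    simp only [hb, hf, hc, star_zero, mul_zero, zero_mul, add_zero, zero_add, neg_zero] at e00 e11 e22 hdet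
    refine ⟨![1, C 0 1, C 0 1 * C 1 2], ?_, Or.inl ?_⟩
    · intro i
      fin_cases i
      · simp
      · simpa using e00
      · simp only [Fin.reduceFinMk, Matrix.cons_val, star_mul]
        linear_combination e00 + C 0 1 * star (C 0 1) * e11
    · ext i j
      fin_cases i <;> fin_cases j <;>
        simp [diagonal_mul, Matrix.mul_assoc, mul_diagonal, diagonal_conjTranspose, hb, hf, hc, h00, h11, h22]
      · simpa using e00
      · have := e00; have := e11
        simp only [RCLike.star_def] at *
        linear_combination e00 + C 0 1 * (starRingEnd ℂ) (C 0 1) * e11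
      · linear_combination hdet
  · have hd : C 1 2 = 0 := by tauto
    have hc : C 1 0 ≠ 0 := by intro h; simp [h, hd] at e11
    have he : C 2 0 = 0 := by tauto
    have hf : C 2 1 ≠ 0 := by intro h; simp [h, he] at e22
    have ha : C 0 1 = 0 := by tauto
    simp only [hd, he, ha, star_zero, mul_zero, zero_mul, add_zero, zero_add, neg_zero] at e00 e11 e22 hdet
    refine ⟨![1, star (C 1 0), C 0 2], ?_, Or.inr ?_⟩
    · intro i
      fin_cases i
      · simp
      · simpa [mul_comm] using e11
      · simpa using e00
    · ext i j
      fin_cases i <;> fin_cases j <;>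
        simp [diagonal_mul, Matrix.mul_assoc, mul_diagonal, diagonal_conjTranspose, hd, he, ha, h00, h11, h22]
      · simpa using e00
      · simpa [mul_comm] using e11
      · linear_combination hdet

theorem stmt_4
    (A B : Matrix (Fin 3) (Fin 3) ℂ)
    (hA : A * Aᴴ = Aᴴ * A)
    (hB : ‖Matrix.toEuclideanCLM (𝕜 := ℂ) B‖ = 1)
    (hspec : {p : ℂ × ℂ × ℂ |
        (p.1 • A + p.2.1 • B + p.2.2 • (A * B) - 1).det = 0} =
      {p : ℂ × ℂ × ℂ | p.1 ^ 3 + p.2.1 ^ 3 + p.2.2 ^ 3 = 1})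
    (A₃ : Matrix (Fin 3) (Fin 3) ℂ)
    (hA₃ : A₃ = Matrix.diagonal
      ![1, Complex.exp (2 * Real.pi * Complex.I / 3),
        Complex.exp (4 * Real.pi * Complex.I / 3)]) :
    ∃ U : Matrix (Fin 3) (Fin 3) ℂ, U * Uᴴ = 1 ∧
      ((U * A * Uᴴ = A₃ ∧ U * B * Uᴴ = !![0,1,0; 0,0,1; 1,0,0]) ∨
       (U * A * Uᴴ = A₃ ∧ U * B * Uᴴ = !![0,0,1; 1,0,0; 0,1,0])) := by
  have hsp : ∀ x y z : ℂ, (x • A + y • B + z • (A * B) - 1).det = 0 ↔ x ^ 3 + y ^ 3 + z ^ 3 = 1 := by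
    intro x y z
    have := Set.ext_iff.1 hspec (x, y, z)
    simpa using this
  have hprim := Complex.isPrimitiveRoot_exp 3 (by norm_num)
  have hw2 : Complex.exp (4 * Real.pi * Complex.I / 3)
      = Complex.exp (2 * Real.pi * Complex.I / 3) ^ 2 := by
    rw [← Complex.exp_nat_mul]; congr 1; push_cast; ring
  rw [hw2] at hA₃
  push_cast at hprim
  generalize Complex.exp (2 * Real.pi * Complex.I / 3) = w at hprim hA₃
  have h3 : w ^ 3 = 1 := hprim.pow_eq_one
  have h1 : w ≠ 1 := hprim.ne_one (by norm_num)
  have hw := aux_omega w h3 h1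
  have key : ∀ x y z : ℂ, (x • A + y • B + z • (A * B)).trace = 0 ∧
      ((x • A + y • B + z • (A * B)) * (x • A + y • B + z • (A * B))).trace = 0 ∧
      (x • A + y • B + z • (A * B)).det = x ^ 3 + y ^ 3 + z ^ 3 := by
    intro x y z
    obtain ⟨ha, hb, hc⟩ := aux_cubic w h3 h1 _ _ _ (x ^ 3 + y ^ 3 + z ^ 3) (fun t => by
      rw [← aux_det (x • A + y • B + z • (A * B)) t]
      have := hsp (t * x) (t * y) (t * z)
      rw [mul_smul, mul_smul, mul_smul, ← smul_add, ← smul_add] at this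
      rw [this]
      constructor <;> intro h <;> linear_combination h)
    refine ⟨ha, ?_, hc⟩
    rw [ha] at hb
    linear_combination 2 * hb
  have kB := key 0 1 0
  have kA := key 1 0 0
  have kAB := key 0 0 1
  have kAAB := key 1 0 1
  simp only [zero_smul, one_smul, zero_add, add_zero] at kB kA kAB kAAB
  have tB : B.trace = 0 := kB.1
  have dB : B.det = 1 := by rw [kB.2.2]; norm_num
  have tAB : (A * B).trace = 0 := kAB.1
  have tAAB : (A * (A * B)).trace = 0 := by
    have := kAAB.2.1
    rw [mul_add, add_mul, add_mul, trace_add, trace_add, trace_add, kA.2.1, kAB.2.1,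
      trace_mul_comm (A * B) A] at this
    linear_combination (1/2) * this
  have hBu := aux_unitary B hB dB
  have hBu' : B * Bᴴ = 1 := mul_eq_one_comm.1 hBu
  have h0w : w ≠ 0 := by rintro rfl; simp at h3
  have h12 : w ^ 2 ≠ 1 := hprim.pow_ne_one_of_pos_of_lt (by norm_num) (by norm_num)
  have hww : w ≠ w ^ 2 := by
    intro h
    exact h1 (mul_left_cancel₀ h0w (by linear_combination -h))
  have hl : ∀ i, (![1, w, w ^ 2] : Fin 3 → ℂ) i ^ 3 = 1 := by
    intro i
    fin_cases i
    · simp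
    · simpa using h3
    · simp only [Fin.reduceFinMk, Matrix.cons_val]
      linear_combination (w ^ 3 + 1) * h3
  obtain ⟨U, hU, hUA⟩ := aux_diag A hA ![1, w, w ^ 2]
    (by
      intro i j hij
      fin_cases i <;> fin_cases j <;> simp at hij ⊢ <;> grind)
    hl
    (by
      intro i
      have := (hsp ((![1, w, w ^ 2] : Fin 3 → ℂ) i ^ 2) 0 0).2 (by
        rw [← pow_mul, mul_comm, pow_mul, hl i]; norm_num)
      simpa using this)
  have hU' : Uᴴ * U = 1 := mul_eq_one_comm.1 hU
  have can : ∀ X : Matrix (Fin 3) (Fin 3) ℂ, Uᴴ * (U * X) = X := by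
    intro X; rw [← Matrix.mul_assoc, hU', Matrix.one_mul]
  have can2 : ∀ X : Matrix (Fin 3) (Fin 3) ℂ, B * (Bᴴ * X) = X := by
    intro X; rw [← Matrix.mul_assoc, hBu', Matrix.one_mul]
  have trU : ∀ X : Matrix (Fin 3) (Fin 3) ℂ, (U * X * Uᴴ).trace = X.trace := by
    intro X; rw [trace_mul_comm, can]
  set C := U * B * Uᴴ with hCdef
  have hCC : C * Cᴴ = 1 := by
    simp only [hCdef, conjTranspose_mul, conjTranspose_conjTranspose, Matrix.mul_assoc, can, can2, hU]
  have hCd : C.det = 1 := by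
    rw [hCdef, det_mul, det_mul, dB, mul_one, ← det_mul, hU, det_one]
  have t0 : C.trace = 0 := by rw [hCdef, trU, tB]
  have t1 : (diagonal ![1, w, w ^ 2] * C).trace = 0 := by
    rw [← hUA, hCdef, ← tAB, ← trU (A * B)]
    simp only [Matrix.mul_assoc, can]
  have t2 : (diagonal ![1, w, w ^ 2] * (diagonal ![1, w, w ^ 2] * C)).trace = 0 := by
    rw [← hUA, hCdef, ← tAAB, ← trU (A * (A * B))]
    simp only [Matrix.mul_assoc, can]
  simp [trace, Fin.sum_univ_three, diagonal_mul] at t0 t1 t2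
  have hw4 : w ^ 4 = w := by linear_combination w * h3
  have h00 : C 0 0 = 0 := by
    linear_combination (1/3) * (t0 + t1 + t2) - (1/3) * (C 1 1 + C 2 2) * hw
      - (1/3) * C 2 2 * hw4
  have h11 : C 1 1 = 0 := by
    have : (w ^ 2 - w) * C 1 1 = 0 := by
      linear_combination w ^ 2 * t0 - t1 - (w ^ 2 - 1) * h00
    exact (mul_eq_zero.1 this).resolve_left (sub_ne_zero.2 hww.symm)
  have h22 : C 2 2 = 0 := by linear_combination t0 - h00 - h11
  obtain ⟨d, hd, hfin⟩ := aux_final C hCC hCd h00 h11 h22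
  have hDD : diagonal d * (diagonal d)ᴴ = 1 := by
    rw [diagonal_conjTranspose, diagonal_mul_diagonal, ← diagonal_one]
    congr 1
    funext i
    exact hd i
  have hDA : (diagonal d * U) * A * (diagonal d * U)ᴴ = A₃ := by
    have : (diagonal d * U) * A * (diagonal d * U)ᴴ = diagonal d * (U * A * Uᴴ) * (diagonal d)ᴴ := by
      simp only [conjTranspose_mul, Matrix.mul_assoc]
    rw [this, hUA, hA₃, diagonal_conjTranspose, diagonal_mul_diagonal, diagonal_mul_diagonal]
    congr 1
    funext i
    have := hd i
    simp only [Pi.star_apply]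
    linear_combination (![1, w, w ^ 2] : Fin 3 → ℂ) i * this
  have hDB : (diagonal d * U) * B * (diagonal d * U)ᴴ = diagonal d * C * (diagonal d)ᴴ := by
    simp only [hCdef, conjTranspose_mul, Matrix.mul_assoc]
  refine ⟨diagonal d * U, ?_, ?_⟩
  · rw [conjTranspose_mul, Matrix.mul_assoc, ← Matrix.mul_assoc U, hU, Matrix.one_mul, hDD]
  · rw [hDB]
    rcases hfin with h | h
    · exact Or.inl ⟨hDA, h⟩
    · exact Or.inr ⟨hDA, h⟩
end
end

section
/- Let n = 4, ω = i, let A₄ ∈ M₄(ℂ) be the diagonal matrix with (A₄)_{jj} = i^j for j = 0,…,3, and let B̂₄ ∈ M₄(ℂ) be the cyclic shift matrix with (B̂₄)_{jk} = 1 if j ≡ k+1 (mod 4) and 0 otherwise. Let A, B ∈ M₄(ℂ) be such that A is normal, the operator norm of B on Euclidean ℂ⁴ equals 1, and {(x,y,z) ∈ ℂ³ : det(x·A + y·B + z·AB − I) = 0} = {(x,y,z) ∈ ℂ³ : x⁴ + y⁴ − z⁴ = 1}. Then there exist a 4×4 permutation matrix P and a unitary U ∈ M₄(ℂ) such that either (U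 A Uᴴ, U B Uᴴ) = (Pᵀ A₄ P, B̂₄) or (U A Uᴴ, U B Uᴴ) = (B̂₄, Pᵀ A₄ P). -/
open Matrix Complex
set_option linter.unusedSimpArgs false
set_option linter.unnecessarySimpa false

noncomputable section

/-- A permutation matrix: the matrix of a permutation `σ`, sending the standard
basis vector `e j` to `e (σ j)`. -/
def IsPermMatrix {n : ℕ} (P : Matrix (Fin n) (Fin n) ℂ) : Prop :=
  ∃ σ : Equiv.Perm (Fin n),
    P = Matrix.of fun i j : Fin n => if i = σ j then 1 else 0

theorem charpoly_pencil (A B : Matrix (Fin 4) (Fin 4) ℂ)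
    (hspec : {p : ℂ × ℂ × ℂ |
        (p.1 • A + p.2.1 • B + p.2.2 • (A * B) - 1).det = 0} =
      {p : ℂ × ℂ × ℂ | p.1 ^ 4 + p.2.1 ^ 4 - p.2.2 ^ 4 = 1}) (x y z : ℂ) :
    (x•A+y•B+z•(A*B)).charpoly = Polynomial.X^4 - Polynomial.C (x^4+y^4-z^4) := by
  set M := x•A+y•B+z•(A*B) with hM
  set s := x^4+y^4-z^4 with hs
  have key : ∀ l : ℂ, l ≠ 0 → (M.charpoly.eval l = 0 ↔ l^4 = s) := by
    intro l hl
    have h := Set.ext_iff.1 hspec (l⁻¹*x, l⁻¹*y, l⁻¹*z)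
    simp only [Set.mem_ofPred_eq] at h
    have e1 : (l⁻¹*x)•A+(l⁻¹*y)•B+(l⁻¹*z)•(A*B) - 1 = (-l⁻¹) • (scalar (Fin 4) l - M) := by
      have : scalar (Fin 4) l = l • (1 : Matrix (Fin 4) (Fin 4) ℂ) := by
        ext i j; simp [Matrix.one_apply, Matrix.diagonal_apply]
      rw [this, hM, smul_sub, smul_smul, neg_mul, inv_mul_cancel₀ hl]
      simp only [smul_add, smul_smul, neg_smul, one_smul, neg_mul]
      abel
    rw [e1, det_smul, ← Matrix.eval_charpoly] at h
    have e2 : (l⁻¹*x)^4 + (l⁻¹*y)^4 - (l⁻¹*z)^4 = 1 ↔ l^4 = s := by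
      rw [hs]; field_simp
      constructor
      · intro h; rw [← h]
      · intro h; rw [h]
    rw [← e2, ← h]
    simp [hl]
  have hmon := M.charpoly_monic
  have hdeg : M.charpoly.natDegree = 4 := by simp [Matrix.charpoly_natDegree_eq_dim]
  by_cases h0 : s = 0
  · have hr : ∀ l ∈ M.charpoly.roots, l = 0 := by
      intro l hl
      by_contra hne
      have := (key l hne).1 ((Polynomial.mem_roots'.1 hl).2)
      rw [h0] at this
      exact hne (by simpa using this)
    have hsp := IsAlgClosed.splits M.charpoly
    have hc : M.charpoly.roots.card = 4 := hsp.natDegree_eq_card_roots.symm.trans hdeg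
    have hrep := Multiset.eq_replicate.2 ⟨hc, hr⟩
    have := hsp.eq_prod_roots_of_monic hmon
    rw [this, hrep, h0]
    simp
    ring
  · obtain ⟨r, hr⟩ := IsAlgClosed.exists_pow_nat_eq s (n := 4) (by norm_num)
    have hr0 : r ≠ 0 := by rintro rfl; apply h0; rw [← hr]; simp
    have hI : (I:ℂ)^2 = -1 := I_sq
    have n1 : (I:ℂ) ≠ 1 := by intro h; have := congrArg re h; simp at this
    have n2 : (I:ℂ) ≠ -1 := by intro h; have := congrArg re h; simp at this
    have n3 : (I:ℂ) ≠ -I := by intro h; have := congrArg im h; norm_num at this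
    have hinj : Function.Injective (fun j : Fin 4 => r * ![1, I, -1, -I] j) := by
      intro j k h
      have h' := mul_left_cancel₀ hr0 h
      fin_cases j <;> fin_cases k <;> simp at h' ⊢ <;>
        first
        | exact n1 h' | exact n1 h'.symm | exact n2 h' | exact n2 h'.symm | exact n3 h' | exact n3 h'.symm
        | (exfalso; apply n1; linear_combination -h')
        | (exfalso; apply n2; linear_combination -h')
        | (exfalso; apply n2; linear_combination h')
        | (exfalso; apply n1; linear_combination h')
        | (norm_num at h')
    have h4 : ∀ j : Fin 4, (r * ![1, I, -1, -I] j)^4 = s := by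
      intro j; rw [← hr, mul_pow]; fin_cases j <;> simp [Even.neg_pow (by decide : Even 4)]
    have hne : ∀ j : Fin 4, r * ![1, I, -1, -I] j ≠ 0 := by
      intro j; fin_cases j <;> simp [hr0]
    apply Polynomial.eq_of_degree_sub_lt_of_eval_finset_eq (Finset.univ.image (fun j : Fin 4 => r * ![1, I, -1, -I] j))
    · rw [Finset.card_image_of_injective _ hinj]
      have hd : (Polynomial.X^4 - Polynomial.C s : Polynomial ℂ).natDegree = 4 := Polynomial.natDegree_X_pow_sub_C
      have hm2 : (Polynomial.X^4 - Polynomial.C s : Polynomial ℂ).Monic := Polynomial.monic_X_pow_sub_C _ (by norm_num)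
      have := Polynomial.degree_sub_lt_left (p := M.charpoly) (q := Polynomial.X^4 - Polynomial.C s) (by
        rw [Polynomial.degree_eq_natDegree hmon.ne_zero, Polynomial.degree_eq_natDegree hm2.ne_zero, hd, hdeg]) hmon.ne_zero (by rw [hmon, hm2])
      rw [Polynomial.degree_eq_natDegree hmon.ne_zero, hdeg] at this
      simpa using this
    · intro l hl
      simp only [Finset.mem_image, Finset.mem_univ, true_and] at hl
      obtain ⟨j, rfl⟩ := hl
      rw [(key _ (hne j)).2 (h4 j)]
      simp [h4 j, -mul_eq_zero, -cons_val]

open scoped ComplexOrder in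
theorem normal_kernel (N : Matrix (Fin 4) (Fin 4) ℂ) (hN : N * Nᴴ = Nᴴ * N)
    (v : Fin 4 → ℂ) (hv : N *ᵥ v = 0) : Nᴴ *ᵥ v = 0 := by
  have h : star (Nᴴ *ᵥ v) ⬝ᵥ (Nᴴ *ᵥ v) = 0 := by
    rw [star_mulVec, conjTranspose_conjTranspose, ← dotProduct_mulVec, mulVec_mulVec, hN,
      ← mulVec_mulVec, hv]
    simp
  exact dotProduct_star_self_eq_zero.1 h

theorem diag_normal (A : Matrix (Fin 4) (Fin 4) ℂ) (hA : A * Aᴴ = Aᴴ * A)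
    (d : Fin 4 → ℂ) (hd : Function.Injective d) (hdet : ∀ j, (scalar (Fin 4) (d j) - A).det = 0) :
    ∃ W : Matrix (Fin 4) (Fin 4) ℂ, Wᴴ * W = 1 ∧ A * W = W * diagonal d := by
  have h1 : ∀ j, ∃ v : Fin 4 → ℂ, v ≠ 0 ∧ A *ᵥ v = d j • v ∧ Aᴴ *ᵥ v = star (d j) • v := by
    intro j
    obtain ⟨v, hv, hv2⟩ := Matrix.exists_mulVec_eq_zero_iff.2 (hdet j)
    have hs : scalar (Fin 4) (d j) = d j • (1 : Matrix (Fin 4) (Fin 4) ℂ) := by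
      ext i j; simp [Matrix.one_apply, Matrix.diagonal_apply]
    rw [hs] at hv2
    have hv3 := normal_kernel _ (by
      simp only [conjTranspose_sub, conjTranspose_smul, conjTranspose_one, sub_mul, mul_sub, hA,
        smul_mul_assoc, mul_smul_comm, one_mul, mul_one, smul_smul, smul_sub]
      rw [mul_comm (d j)]
      abel) v hv2
    refine ⟨v, hv, ?_, ?_⟩
    · rw [sub_mulVec, smul_mulVec, one_mulVec] at hv2
      exact (sub_eq_zero.1 hv2).symm
    · rw [conjTranspose_sub, conjTranspose_smul, conjTranspose_one, sub_mulVec, smul_mulVec,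
        one_mulVec] at hv3
      exact (sub_eq_zero.1 hv3).symm
  choose v hv0 hv1 hv2 using h1
  have horth : ∀ j k, j ≠ k → star (v j) ⬝ᵥ v k = 0 := by
    intro j k hjk
    have e1 : star (v j) ⬝ᵥ (A *ᵥ v k) = d k * (star (v j) ⬝ᵥ v k) := by
      rw [hv1, dotProduct_smul, smul_eq_mul]
    have e2 : star (v j) ⬝ᵥ (A *ᵥ v k) = d j * (star (v j) ⬝ᵥ v k) := by
      rw [dotProduct_mulVec]
      have : star (v j) ᵥ* A = d j • star (v j) := by
        have := congrArg star (hv2 j)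
        rw [star_mulVec, conjTranspose_conjTranspose] at this
        rw [this, star_smul, star_star]
      rw [this, smul_dotProduct, smul_eq_mul]
    have e3 : (d k - d j) * (star (v j) ⬝ᵥ v k) = 0 := by
      rw [sub_mul, ← e1, ← e2, sub_self]
    rcases mul_eq_zero.1 e3 with h | h
    · exact absurd (hd (sub_eq_zero.1 h)).symm hjk
    · exact h
  have hn : ∀ j, ∃ c : ℂ, star c * c * (star (v j) ⬝ᵥ v j) = 1 := by
    intro j
    obtain ⟨r, hr⟩ : ∃ r : ℝ, 0 < r ∧ star (v j) ⬝ᵥ v j = (r : ℂ) := by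
      refine ⟨∑ i, Complex.normSq (v j i), ?_, ?_⟩
      · obtain ⟨i, hi⟩ := Function.ne_iff.1 (hv0 j)
        exact Finset.sum_pos' (fun i _ => Complex.normSq_nonneg _)
          ⟨i, Finset.mem_univ _, Complex.normSq_pos.2 hi⟩
      · simp only [dotProduct, Pi.star_apply, Complex.ofReal_sum]
        refine Finset.sum_congr rfl fun i _ => ?_
        rw [Complex.normSq_eq_conj_mul_self]; rfl
    refine ⟨((Real.sqrt r)⁻¹ : ℝ), ?_⟩
    rw [hr.2]
    have : (Real.sqrt r)⁻¹ * (Real.sqrt r)⁻¹ * r = 1 := by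
      rw [← mul_inv, Real.mul_self_sqrt hr.1.le, inv_mul_cancel₀ hr.1.ne']
    simp only [Complex.star_def, Complex.conj_ofReal]
    exact_mod_cast this
  choose c hc using hn
  refine ⟨Matrix.of fun i j => c j * v j i, ?_, ?_⟩
  · ext j k
    have : ((Matrix.of fun i j => c j * v j i)ᴴ * (Matrix.of fun i j => c j * v j i) :
        Matrix (Fin 4) (Fin 4) ℂ) j k = star (c j) * c k * (star (v j) ⬝ᵥ v k) := by
      simp only [mul_apply, conjTranspose_apply, of_apply, dotProduct, Finset.mul_sum,
        Pi.star_apply, star_mul']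
      refine Finset.sum_congr rfl fun i _ => ?_
      ring
    rw [this]
    by_cases hjk : j = k
    · subst hjk; rw [hc]; simp
    · rw [horth j k hjk]; simp [hjk]
  · ext i k
    have := congrFun (hv1 k) i
    simp only [mulVec, dotProduct, Pi.smul_apply, smul_eq_mul] at this
    rw [mul_diagonal]
    simp only [mul_apply, of_apply]
    rw [mul_assoc, mul_comm (v k i), ← this, Finset.mul_sum]
    refine Finset.sum_congr rfl fun i _ => ?_
    ring

theorem unitary_of_contraction (B : Matrix (Fin 4) (Fin 4) ℂ)
    (hB : ‖Matrix.toEuclideanCLM (𝕜 := ℂ) B‖ = 1) (h4 : B ^ 4 = 1) : Bᴴ * B = 1 := by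
  set T := Matrix.toEuclideanCLM (𝕜 := ℂ) (n := Fin 4) B with hT
  have hle : ∀ x, ‖T x‖ ≤ ‖x‖ := fun x => by
    have := T.le_opNorm x
    rwa [hB, one_mul] at this
  have hT4 : T ^ 4 = 1 := by rw [hT, ← map_pow, h4, map_one]
  have hiso : ∀ x, ‖T x‖ = ‖x‖ := by
    intro x
    apply le_antisymm (hle x)
    have : T (T (T (T x))) = x := by
      have := congrArg (fun S => S x) hT4
      simpa [pow_succ] using this
    calc ‖x‖ = ‖T (T (T (T x)))‖ := by rw [this]
      _ ≤ _ := (hle _).trans ((hle _).trans (hle _))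
  have h := (ContinuousLinearMap.norm_map_iff_adjoint_comp_self T).1 hiso
  apply EquivLike.injective (Matrix.toEuclideanCLM (𝕜 := ℂ) (n := Fin 4))
  rw [map_mul, map_one, ← star_eq_conjTranspose, map_star]
  exact h

theorem det_four (M : Matrix (Fin 4) (Fin 4) ℂ) : M.det =
    M 0 0 * (M 1 1 * (M 2 2 * M 3 3 - M 2 3 * M 3 2) - M 1 2 * (M 2 1 * M 3 3 - M 2 3 * M 3 1)
      + M 1 3 * (M 2 1 * M 3 2 - M 2 2 * M 3 1))
    - M 0 1 * (M 1 0 * (M 2 2 * M 3 3 - M 2 3 * M 3 2) - M 1 2 * (M 2 0 * M 3 3 - M 2 3 * M 3 0)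
      + M 1 3 * (M 2 0 * M 3 2 - M 2 2 * M 3 0))
    + M 0 2 * (M 1 0 * (M 2 1 * M 3 3 - M 2 3 * M 3 1) - M 1 1 * (M 2 0 * M 3 3 - M 2 3 * M 3 0)
      + M 1 3 * (M 2 0 * M 3 1 - M 2 1 * M 3 0))
    - M 0 3 * (M 1 0 * (M 2 1 * M 3 2 - M 2 2 * M 3 1) - M 1 1 * (M 2 0 * M 3 2 - M 2 2 * M 3 0)
      + M 1 2 * (M 2 0 * M 3 1 - M 2 1 * M 3 0)) := by
  have h0 : (0 : Fin 4) = Fin.succAbove 1 0 := rfl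
  rw [Matrix.det_succ_row_zero]
  simp only [Fin.sum_univ_four, det_fin_three, submatrix_apply]
  simp [Fin.succAbove, Fin.lt_def]
  ring

theorem quartic_zero (c0 c1 c2 c3 c4 : ℂ)
    (h : ∀ y : ℂ, c0 + c1 * y + c2 * y ^ 2 + c3 * y ^ 3 + c4 * y ^ 4 = 0) :
    c1 = 0 ∧ c2 = 0 ∧ c3 = 0 ∧ c4 = 0 := by
  have h0 := h 0
  have h1 := h 1
  have h2 := h (-1)
  have h3 := h 2
  have h4 := h (-2)
  refine ⟨?_, ?_, ?_, ?_⟩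
  · linear_combination (2/3) * h1 - (2/3) * h2 - (1/12) * h3 + (1/12) * h4
  · linear_combination (2/3) * h1 + (2/3) * h2 - (1/24) * h3 - (1/24) * h4 - (5/4) * h0
  · linear_combination -(1/6) * h1 + (1/6) * h2 + (1/12) * h3 - (1/12) * h4
  · linear_combination -(1/6) * h1 - (1/6) * h2 + (1/24) * h3 + (1/24) * h4 + (1/4) * h0

/-- The diagonal of `A` after diagonalisation. -/
def dg : Fin 4 → ℂ := ![1, I, -1, -I]

theorem coeffs (B : Matrix (Fin 4) (Fin 4) ℂ)
    (H : ∀ x y z : ℂ, (x • diagonal dg + y • B + z • (diagonal dg * B) - 1).det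
      = 1 - (x ^ 4 + y ^ 4 - z ^ 4)) (x t : ℂ) (e f : Fin 4 → ℂ)
    (he : ∀ j, e j = x * dg j - 1) (hf : ∀ j, f j = 1 + t * dg j) :
    (f 0 * B 0 0 * e 1 * e 2 * e 3 + f 1 * B 1 1 * e 0 * e 2 * e 3 + f 2 * B 2 2 * e 0 * e 1 * e 3
      + f 3 * B 3 3 * e 0 * e 1 * e 2 = 0) ∧
    (f 0 * f 1 * (B 0 0 * B 1 1 - B 0 1 * B 1 0) * e 2 * e 3
      + f 0 * f 2 * (B 0 0 * B 2 2 - B 0 2 * B 2 0) * e 1 * e 3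
      + f 0 * f 3 * (B 0 0 * B 3 3 - B 0 3 * B 3 0) * e 1 * e 2
      + f 1 * f 2 * (B 1 1 * B 2 2 - B 1 2 * B 2 1) * e 0 * e 3
      + f 1 * f 3 * (B 1 1 * B 3 3 - B 1 3 * B 3 1) * e 0 * e 2
      + f 2 * f 3 * (B 2 2 * B 3 3 - B 2 3 * B 3 2) * e 0 * e 1 = 0) ∧
    (e 3 * f 0 * f 1 * f 2 * (B 0 0 * (B 1 1 * B 2 2 - B 1 2 * B 2 1)
        - B 0 1 * (B 1 0 * B 2 2 - B 1 2 * B 2 0) + B 0 2 * (B 1 0 * B 2 1 - B 1 1 * B 2 0))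
      + e 2 * f 0 * f 1 * f 3 * (B 0 0 * (B 1 1 * B 3 3 - B 1 3 * B 3 1)
        - B 0 1 * (B 1 0 * B 3 3 - B 1 3 * B 3 0) + B 0 3 * (B 1 0 * B 3 1 - B 1 1 * B 3 0))
      + e 1 * f 0 * f 2 * f 3 * (B 0 0 * (B 2 2 * B 3 3 - B 2 3 * B 3 2)
        - B 0 2 * (B 2 0 * B 3 3 - B 2 3 * B 3 0) + B 0 3 * (B 2 0 * B 3 2 - B 2 2 * B 3 0))
      + e 0 * f 1 * f 2 * f 3 * (B 1 1 * (B 2 2 * B 3 3 - B 2 3 * B 3 2)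
        - B 1 2 * (B 2 1 * B 3 3 - B 2 3 * B 3 1) + B 1 3 * (B 2 1 * B 3 2 - B 2 2 * B 3 1))
      = 0) ∧ f 0 * f 1 * f 2 * f 3 * B.det + (1 - t ^ 4) = 0 := by
  apply quartic_zero (e 0 * e 1 * e 2 * e 3 - (1 - x ^ 4)) _ _ _
    (f 0 * f 1 * f 2 * f 3 * B.det + (1 - t ^ 4))
  intro y
  have h := H x y (y * t)
  have hM : x • diagonal dg + y • B + (y * t) • (diagonal dg * B) - 1
      = Matrix.of fun i j => (if i = j then e i else 0) + y * f i * B i j := by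
    ext i j
    simp only [Matrix.add_apply, Matrix.sub_apply, Matrix.smul_apply, diagonal_mul, diagonal_apply,
      one_apply, of_apply, smul_eq_mul, he, hf]
    split_ifs <;> ring
  rw [hM, det_four] at h
  simp [of_apply] at h
  rw [det_four]
  linear_combination h

theorem conds (B : Matrix (Fin 4) (Fin 4) ℂ)
    (H : ∀ x y z : ℂ, (x • diagonal dg + y • B + z • (diagonal dg * B) - 1).det
      = 1 - (x ^ 4 + y ^ 4 - z ^ 4)) :
    (B 0 0 = 0 ∧ B 1 1 = 0 ∧ B 2 2 = 0 ∧ B 3 3 = 0) ∧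
    (B 0 3 * B 3 0 = B 0 1 * B 1 0 ∧ B 1 2 * B 2 1 = B 0 1 * B 1 0 ∧
      B 2 3 * B 3 2 = B 0 1 * B 1 0 ∧ B 0 2 * B 2 0 = - 2 * (B 0 1 * B 1 0) ∧
      B 1 3 * B 3 1 = - 2 * (B 0 1 * B 1 0)) ∧
    (B 0 1 * B 1 2 * B 2 0 + B 0 2 * B 2 1 * B 1 0 = 0 ∧
     B 0 1 * B 1 3 * B 3 0 + B 0 3 * B 3 1 * B 1 0 = 0 ∧
     B 0 2 * B 2 3 * B 3 0 + B 0 3 * B 3 2 * B 2 0 = 0 ∧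
     B 1 2 * B 2 3 * B 3 1 + B 1 3 * B 3 2 * B 2 1 = 0) ∧
    B 0 0 * (B 1 1 * (B 2 2 * B 3 3 - B 2 3 * B 3 2) - B 1 2 * (B 2 1 * B 3 3 - B 2 3 * B 3 1)
      + B 1 3 * (B 2 1 * B 3 2 - B 2 2 * B 3 1))
    - B 0 1 * (B 1 0 * (B 2 2 * B 3 3 - B 2 3 * B 3 2) - B 1 2 * (B 2 0 * B 3 3 - B 2 3 * B 3 0)
      + B 1 3 * (B 2 0 * B 3 2 - B 2 2 * B 3 0))
    + B 0 2 * (B 1 0 * (B 2 1 * B 3 3 - B 2 3 * B 3 1) - B 1 1 * (B 2 0 * B 3 3 - B 2 3 * B 3 0)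
      + B 1 3 * (B 2 0 * B 3 1 - B 2 1 * B 3 0))
    - B 0 3 * (B 1 0 * (B 2 1 * B 3 2 - B 2 2 * B 3 1) - B 1 1 * (B 2 0 * B 3 2 - B 2 2 * B 3 0)
      + B 1 2 * (B 2 0 * B 3 1 - B 2 1 * B 3 0)) = -1 := by
  have C := fun x t => coeffs B H x t _ _ (fun _ => rfl) (fun _ => rfl)
  simp only [dg, cons_val] at C
  have hI : (I:ℂ)^2 = -1 := I_sq
  have hI3 : (I:ℂ)^3 = -I := by linear_combination I * hI
  have hI4 : (I:ℂ)^4 = 1 := by linear_combination (I^2-1) * hI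
  have hI5 : (I:ℂ)^5 = I := by linear_combination I*(I^2-1) * hI
  have hI6 : (I:ℂ)^6 = -1 := by linear_combination (I^4-I^2+1) * hI
  have d0 : B 0 0 = 0 := by
    have := (C 1 0).1
    ring_nf at this; simp only [hI, hI3] at this; ring_nf at this; simpa using this
  have d1 : B 1 1 = 0 := by
    have := (C (-I) 0).1
    ring_nf at this; simp only [hI, hI3, hI4, hI5, hI6] at this; ring_nf at this; simpa using this
  have d2 : B 2 2 = 0 := by
    have := (C (-1) 0).1
    ring_nf at this; simp only [hI, hI3, hI4, hI5, hI6] at this; ring_nf at this; simpa using this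
  have d3 : B 3 3 = 0 := by
    have := (C I 0).1
    ring_nf at this; simp only [hI, hI3, hI4, hI5, hI6] at this; ring_nf at this; simpa using this
  refine ⟨⟨d0, d1, d2, d3⟩, ?_, ?_, ?_⟩
  · have q0 := (C 1 0).2.1
    have q0' := (C 1 1).2.1
    have q1 := (C (-I) 0).2.1
    have q1' := (C (-I) 1).2.1
    have q2 := (C (-1) 0).2.1
    have q2' := (C (-1) 1).2.1
    simp only [d0, d1, d2, d3] at q0 q0' q1 q1' q2 q2'
    ring_nf at q0 q0' q1 q1' q2 q2'
    simp only [hI, hI3, hI4, hI5, hI6] at q0 q0' q1 q1' q2 q2'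
    try ring_nf at q0 q0'
    try ring_nf at q1 q1'
    have h03 : B 0 3 * B 3 0 = B 0 1 * B 1 0 := by
      linear_combination (-I/8) * q0' + (B 0 3 * B 3 0 - B 0 1 * B 1 0) * hI
    have h02 : B 0 2 * B 2 0 = - 2 * (B 0 1 * B 1 0) := by
      linear_combination (-1/2) * q0 + (I - 1) * h03
    have h13 : B 1 3 * B 3 1 = - 2 * (B 0 1 * B 1 0) := by
      linear_combination (-1/4) * q1'
    have h12 : B 1 2 * B 2 1 = B 0 1 * B 1 0 := by
      linear_combination (-(1-I)/4) * q1 - (1-I)/2 * h13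
        + (B 1 2 * B 2 1 - B 0 1 * B 1 0) / 2 * hI
    have h23 : B 2 3 * B 3 2 = B 0 1 * B 1 0 := by
      linear_combination (-(1-I)/4) * q2 + (1-I)/4 * (2*(I-1)*h12 - 2 * h02)
        + (B 2 3 * B 3 2 - B 0 1 * B 1 0) / 2 * hI
    exact ⟨h03, h12, h23, h02, h13⟩
  · have q0 := (C 0 (-1)).2.2.1
    have q1 := (C 0 I).2.2.1
    have q2 := (C 0 1).2.2.1
    have q3 := (C 0 (-I)).2.2.1
    simp only [d0, d1, d2, d3] at q0 q1 q2 q3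
    ring_nf at q0 q1 q2 q3
    simp only [hI, hI3, hI4, hI5, hI6] at q0 q1 q2 q3
    ring_nf at q0 q1 q2 q3
    refine ⟨?_, ?_, ?_, ?_⟩
    · linear_combination (-1/4) * q3
    · linear_combination (-1/4) * q2
    · linear_combination (-1/4) * q1
    · linear_combination (-1/4) * q0
  · have h := (C 0 0).2.2.2
    rw [det_four] at h
    linear_combination h

/-- The pencil identity. -/
def Pencil (A B : Matrix (Fin 4) (Fin 4) ℂ) : Prop :=
  ∀ x y z : ℂ, (x • A + y • B + z • (A * B) - 1).det = 1 - (x ^ 4 + y ^ 4 - z ^ 4)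

theorem Pencil.conj {A B V : Matrix (Fin 4) (Fin 4) ℂ} (h : Pencil A B) (hV : V * Vᴴ = 1) :
    Pencil (V * A * Vᴴ) (V * B * Vᴴ) := by
  intro x y z
  have hV' : Vᴴ * V = 1 := mul_eq_one_comm.1 hV
  rw [← h x y z]
  have e : x • (V * A * Vᴴ) + y • (V * B * Vᴴ) + z • (V * A * Vᴴ * (V * B * Vᴴ)) - 1
      = V * (x • A + y • B + z • (A * B) - 1) * Vᴴ := by
    have e1 : V * A * Vᴴ * (V * B * Vᴴ) = V * (A * B) * Vᴴ := by
      calc V * A * Vᴴ * (V * B * Vᴴ) = V * A * (Vᴴ * V) * B * Vᴴ := by simp only [mul_assoc]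
        _ = _ := by rw [hV']; simp only [mul_assoc, mul_one, one_mul]
    rw [e1]
    simp only [mul_sub, sub_mul, mul_add, add_mul, mul_smul_comm, smul_mul_assoc, mul_one, hV]
  rw [e, det_mul, det_mul, mul_comm, ← mul_assoc, ← det_mul, hV', det_one, one_mul]

theorem conj_unitary {B V : Matrix (Fin 4) (Fin 4) ℂ} (hB : Bᴴ * B = 1) (hV : V * Vᴴ = 1) :
    (V * B * Vᴴ)ᴴ * (V * B * Vᴴ) = 1 := by
  have hV' : Vᴴ * V = 1 := mul_eq_one_comm.1 hV
  simp only [conjTranspose_mul, conjTranspose_conjTranspose]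
  calc V * (Bᴴ * Vᴴ) * (V * B * Vᴴ) = V * Bᴴ * (Vᴴ * V) * B * Vᴴ := by simp only [mul_assoc]
    _ = V * (Bᴴ * B) * Vᴴ := by rw [hV']; simp only [mul_assoc, one_mul]
    _ = 1 := by rw [hB, mul_one, hV]

/-- A monomial matrix. -/
def mono (e : Equiv.Perm (Fin 4)) (τ : Fin 4 → ℂ) : Matrix (Fin 4) (Fin 4) ℂ :=
  Matrix.of fun i j => if j = e i then τ i else 0

theorem mono_conj (e : Equiv.Perm (Fin 4)) (τ : Fin 4 → ℂ) (M : Matrix (Fin 4) (Fin 4) ℂ)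
    (i j : Fin 4) : (mono e τ * M * (mono e τ)ᴴ) i j = τ i * M (e i) (e j) * star (τ j) := by
  simp only [mono, mul_apply, conjTranspose_apply, of_apply, apply_ite star, star_zero, ite_mul,
    zero_mul, mul_ite, mul_zero, Finset.sum_ite_eq', Finset.mem_univ, if_true]

theorem mono_unitary (e : Equiv.Perm (Fin 4)) (τ : Fin 4 → ℂ) (hτ : ∀ i, τ i * star (τ i) = 1) :
    mono e τ * (mono e τ)ᴴ = 1 := by
  ext i j
  have := mono_conj e τ 1 i j
  rw [mul_one] at this
  rw [this]
  by_cases h : i = j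
  · subst h; simp only [one_apply_eq, mul_one, hτ]
  · simp [one_apply, h]

/-- The permutation matrix of `σ`. -/
def pm (σ : Equiv.Perm (Fin 4)) : Matrix (Fin 4) (Fin 4) ℂ :=
  Matrix.of fun i j : Fin 4 => if i = σ j then 1 else 0

theorem pm_conj (σ : Equiv.Perm (Fin 4)) (d : Fin 4 → ℂ) :
    (pm σ)ᵀ * diagonal d * pm σ = diagonal fun j => d (σ j) := by
  ext i j
  simp only [pm, mul_apply, transpose_apply, of_apply, diagonal_apply, ite_mul, one_mul, zero_mul,
    mul_ite, mul_one, mul_zero, Finset.sum_ite_eq', Finset.sum_ite_eq, Finset.mem_univ, if_true]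
  by_cases h : i = j
  · subst h; simp
  · simp only [h, if_false, EmbeddingLike.apply_eq_iff_eq]
    simp [Ne.symm h]

/-- The cyclic shift. -/
def shift : Matrix (Fin 4) (Fin 4) ℂ := Matrix.of fun j k : Fin 4 => if j = k + 1 then 1 else 0

theorem case_mono (B : Matrix (Fin 4) (Fin 4) ℂ) (hU : Bᴴ * B = 1) (hdet : B.det = -1)
    (e : Equiv.Perm (Fin 4)) (hz : ∀ j k, j ≠ k + 1 → B (e j) (e k) = 0) :
    ∃ P V : Matrix (Fin 4) (Fin 4) ℂ, IsPermMatrix P ∧ V * Vᴴ = 1 ∧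
      V * diagonal dg * Vᴴ = Pᵀ * diagonal dg * P ∧ V * B * Vᴴ = shift := by
  have hd : (B.submatrix e e).det = -1 := by rw [det_submatrix_equiv_self, hdet]
  have hn : ∀ k, star (B (e (k + 1)) (e k)) * B (e (k + 1)) (e k) = 1 := by
    intro k
    have h := congrFun (congrFun hU (e k)) (e k)
    rw [mul_apply, ← Equiv.sum_comp e, Finset.sum_eq_single (k + 1)] at h
    · simpa [one_apply_eq] using h
    · intro j _ hj; rw [hz j k hj]; simp
    · simp
  rw [det_four] at hd
  simp only [submatrix_apply] at hd
  have z := fun j k h => hz j k h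
  rw [z 0 0 (by decide), z 1 1 (by decide), z 2 2 (by decide), z 3 3 (by decide),
    z 0 1 (by decide), z 0 2 (by decide), z 1 2 (by decide)] at hd
  have n0 := hn 0
  have n1 := hn 1
  have n2 := hn 2
  have n3 := hn 3
  simp only [show (0 : Fin 4) + 1 = 1 from rfl, show (1 : Fin 4) + 1 = 2 from rfl,
    show (2 : Fin 4) + 1 = 3 from rfl, show (3 : Fin 4) + 1 = 0 from rfl] at n0 n1 n2 n3
  set c0 := B (e 1) (e 0) with hc0
  set c1 := B (e 2) (e 1) with hc1
  set c2 := B (e 3) (e 2) with hc2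
  set c3 := B (e 0) (e 3) with hc3
  have hprod : c0 * c1 * c2 * c3 = 1 := by linear_combination -hd
  let τ : Fin 4 → ℂ := ![1, star c0, star c0 * star c1, star c0 * star c1 * star c2]
  have hτ : ∀ i, τ i * star (τ i) = 1 := by
    intro i
    fin_cases i
    · simp [τ]
    · simp only [τ, Fin.mk_one, cons_val, star_star]; exact n0
    · simp only [τ, Fin.reduceFinMk, cons_val, star_star, star_mul']
      linear_combination star c1 * c1 * n0 + n1
    · simp only [τ, Fin.reduceFinMk, cons_val, star_star, star_mul']
      linear_combination star c1 * c1 * star c2 * c2 * n0 + star c2 * c2 * n1 + n2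
  refine ⟨pm e, mono e τ, ⟨e, rfl⟩, mono_unitary e τ hτ, ?_, ?_⟩
  · rw [pm_conj]
    ext i j
    rw [mono_conj]
    by_cases h : i = j
    · subst h; simp only [diagonal_apply_eq]; linear_combination dg (e i) * hτ i
    · simp [diagonal_apply, h]
  · ext i j
    rw [mono_conj]
    by_cases h : i = j + 1
    · subst h
      simp only [shift, of_apply, if_true]
      fin_cases j
      · show τ 1 * B (e 1) (e 0) * star (τ 0) = 1
        simp only [τ, cons_val, star_one, ← hc0]; linear_combination n0
      · show τ 2 * B (e 2) (e 1) * star (τ 1) = 1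
        simp only [τ, cons_val, star_star, ← hc1]
        linear_combination star c1 * c1 * n0 + n1
      · show τ 3 * B (e 3) (e 2) * star (τ 2) = 1
        simp only [τ, cons_val, star_star, star_mul', ← hc2]
        linear_combination star c1 * c1 * star c2 * c2 * n0 + star c2 * c2 * n1 + n2
      · show τ 0 * B (e 0) (e 3) * star (τ 3) = 1
        simp only [τ, cons_val, star_star, star_mul', ← hc3]
        linear_combination hprod
    · rw [hz i j h]; simp [shift, h]

theorem case_zero (B : Matrix (Fin 4) (Fin 4) ℂ) (hU : Bᴴ * B = 1) (H : Pencil (diagonal dg) B)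
    (hp : B 0 1 * B 1 0 = 0) :
    ∃ P V : Matrix (Fin 4) (Fin 4) ℂ, IsPermMatrix P ∧ V * Vᴴ = 1 ∧
      V * diagonal dg * Vᴴ = Pᵀ * diagonal dg * P ∧ V * B * Vᴴ = shift := by
  obtain ⟨⟨d0, d1, d2, d3⟩, ⟨p03, p12, p23, p02, p13⟩, ⟨t3, t2, t1, t0⟩, hdet⟩ := conds B H
  have hdet' : B.det = -1 := by rw [det_four]; exact hdet
  rw [hp] at p03 p12 p23 p02 p13
  rw [mul_zero] at p02 p13
  have hd : ∀ j, B j j = 0 := by intro j; fin_cases j <;> assumption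
  have h2 : ∀ j k, j ≠ k → B j k * B k j = 0 := by
    intro j k hjk
    fin_cases j <;> fin_cases k <;>
      first
      | exact absurd rfl hjk
      | assumption
      | (rw [mul_comm]; assumption)
  have h3' : ∀ j k l, j ≠ k → k ≠ l → l ≠ j →
      B j k * B k l * B l j + B j l * B l k * B k j = 0 := by
    intro j k l h1 h2 h3
    fin_cases j <;> fin_cases k <;> fin_cases l <;>
      first
      | exact absurd rfl h1
      | exact absurd rfl h2
      | exact absurd rfl h3
      | (simp only [Fin.zero_eta, Fin.mk_one, Fin.reduceFinMk]
         first
         | linear_combination t0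
         | linear_combination t1
         | linear_combination t2
         | linear_combination t3)
  have h3 : ∀ j k l, j ≠ k → k ≠ l → l ≠ j → B j k * B k l * B l j = 0 := by
    intro j k l a b c
    have := h3' j k l a b c
    have q := h2 j k a
    have : (B j k * B k l * B l j) ^ 2 = 0 := by
      linear_combination (B j k * B k l * B l j) * this - B k l * B l j * B j l * B l k * q
    simpa using this
  have key : ∀ e : Equiv.Perm (Fin 4),
      B (e 1) (e 0) * B (e 2) (e 1) * B (e 3) (e 2) * B (e 0) (e 3) ≠ 0 →
      ∃ P V : Matrix (Fin 4) (Fin 4) ℂ, IsPermMatrix P ∧ V * Vᴴ = 1 ∧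
      V * diagonal dg * Vᴴ = Pᵀ * diagonal dg * P ∧ V * B * Vᴴ = shift := by
    intro e he
    simp only [ne_eq, mul_eq_zero, not_or] at he
    obtain ⟨⟨⟨n0, n1⟩, n2⟩, n3⟩ := he
    have ne : ∀ j k : Fin 4, j ≠ k → e j ≠ e k := fun j k h => e.injective.ne h
    have H3 := fun j k l (a : j ≠ k) (b : k ≠ l) (c : l ≠ j) =>
      h3 (e j) (e k) (e l) (ne _ _ a) (ne _ _ b) (ne _ _ c)
    have H2 := fun j k (a : j ≠ k) => h2 (e j) (e k) (ne _ _ a)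
    apply case_mono B hU hdet' e
    have q01 := H2 0 1 (by decide)
    have q12 := H2 1 2 (by decide)
    have q23 := H2 2 3 (by decide)
    have q30 := H2 3 0 (by decide)
    have r02 := H3 0 2 1 (by decide) (by decide) (by decide)
    have r02' := H3 2 0 3 (by decide) (by decide) (by decide)
    have r13 := H3 1 3 2 (by decide) (by decide) (by decide)
    have r13' := H3 3 1 0 (by decide) (by decide) (by decide)
    simp only [mul_eq_zero, n0, n1, n2, n3, or_false] at q01 q12 q23 q30 r02 r02' r13 r13'
    intro j k hjk
    fin_cases j <;> fin_cases k <;>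
      first
      | exact hd _
      | exact absurd rfl hjk
      | assumption
  by_contra hcon
  have key' : ∀ e : Equiv.Perm (Fin 4),
      B (e 1) (e 0) * B (e 2) (e 1) * B (e 3) (e 2) * B (e 0) (e 3) = 0 := by
    intro e; by_contra h; exact hcon (key e h)
  have k1 := key' ⟨![0,1,2,3], ![0,1,2,3], by decide, by decide⟩
  have k2 := key' ⟨![0,1,3,2], ![0,1,3,2], by decide, by decide⟩
  have k3 := key' ⟨![0,2,1,3], ![0,2,1,3], by decide, by decide⟩
  have k4 := key' ⟨![0,2,3,1], ![0,3,1,2], by decide, by decide⟩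
  have k5 := key' ⟨![0,3,1,2], ![0,2,3,1], by decide, by decide⟩
  have k6 := key' ⟨![0,3,2,1], ![0,3,2,1], by decide, by decide⟩
  simp only [Equiv.coe_fn_mk, cons_val] at k1 k2 k3 k4 k5 k6
  rw [d0, d1, d2, d3] at hdet
  have : (0 : ℂ) = -1 := by
    linear_combination hdet + k1 + k2 + k3 + k4 + k5 + k6 - B 2 3 * B 3 2 * hp - B 1 3 * B 3 1 * p02 - B 1 2 * B 2 1 * p03
  norm_num at this

theorem sq_cancel {r u v : ℝ} (hr : 0 < r) (hu : 0 < u) (hv : 0 < v)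
    (h : r ^ 2 * u ^ 2 = r ^ 2 * v ^ 2) : u = v := by
  have h1 : u ^ 2 = v ^ 2 := mul_left_cancel₀ (by positivity) h
  exact (sq_eq_sq₀ hu.le hv.le).1 h1

theorem perron (r m01 m02 m03 m10 m12 m13 m20 m21 m23 m30 m31 m32 : ℝ) (hr : 0 < r)
    (g10 : 0 < m10) (g12 : 0 < m12) (g13 : 0 < m13)
    (g20 : 0 < m20) (g21 : 0 < m21) (g23 : 0 < m23) (g30 : 0 < m30) (g31 : 0 < m31)
    (g32 : 0 < m32)
    (q01 : m01 * m10 = r ^ 2) (q12 : m12 * m21 = r ^ 2) (q23 : m23 * m32 = r ^ 2)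
    (q03 : m03 * m30 = r ^ 2) (q02 : m02 * m20 = 4 * r ^ 2) (q13 : m13 * m31 = 4 * r ^ 2)
    (t3 : m01 * m12 * m20 = m02 * m21 * m10) (t2 : m01 * m13 * m30 = m03 * m31 * m10)
    (t1 : m02 * m23 * m30 = m03 * m32 * m20)
    (c0 : m10 + m20 + m30 = 1) (c1 : m01 + m21 + m31 = 1) (c2 : m02 + m12 + m32 = 1)
    (c3 : m03 + m13 + m23 = 1) :
    m10 = 1 / 4 ∧ m21 = 1 / 4 ∧ m32 = 1 / 4 ∧ m30 = 1 / 4 ∧ m20 = 1 / 2 := by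
  have e1 : r * m20 = 2 * (m21 * m10) := by
    apply sq_cancel hr (by positivity) (by positivity)
    linear_combination (m21 * m10) * m20 * t3 + (m21 * m10) ^ 2 * q02
      - m20 ^ 2 * (m12 * m21 * q01 + r ^ 2 * q12)
  have e2 : 2 * r * m30 = m31 * m10 := by
    apply sq_cancel hr (by positivity) (by positivity)
    linear_combination (m31 * m10) * m30 * t2 + (m31 * m10) ^ 2 * q03
      - m30 ^ 2 * (m13 * m31 * q01 + r ^ 2 * q13)
  have e3 : 2 * r * m10 = m12 * m20 := by
    apply sq_cancel hr (by positivity) (by positivity)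
    linear_combination -(m12 * m20) * m10 * t3 + (m12 * m20) ^ 2 * q01
      - m10 ^ 2 * (m12 * m21 * q02 + 4 * r ^ 2 * q12)
  have e4 : 2 * r * m30 = m32 * m20 := by
    apply sq_cancel hr (by positivity) (by positivity)
    linear_combination (m32 * m20) * m30 * t1 + (m32 * m20) ^ 2 * q03
      - m30 ^ 2 * (m23 * m32 * q02 + 4 * r ^ 2 * q23)
  have e5 : 2 * r * m10 = m13 * m30 := by
    apply sq_cancel hr (by positivity) (by positivity)
    linear_combination -(m13 * m30) * m10 * t2 + (m13 * m30) ^ 2 * q01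
      - m10 ^ 2 * (m13 * m31 * q03 + r ^ 2 * q13)
  have e6 : r * m20 = 2 * (m23 * m30) := by
    apply sq_cancel hr (by positivity) (by positivity)
    linear_combination -(m23 * m30) * m20 * t1 + (m23 * m30) ^ 2 * q02
      - m20 ^ 2 * (m23 * m32 * q03 + r ^ 2 * q23)
  have f1 : r ^ 2 + r * m20 / 2 + 2 * r * m30 = m10 := by
    linear_combination m10 * c1 - q01 + e1 / 2 + e2
  have f2 : 4 * r ^ 2 + 2 * r * m10 + 2 * r * m30 = m20 := by
    linear_combination m20 * c2 - q02 + e3 + e4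
  have f3 : r ^ 2 + 2 * r * m10 + r * m20 / 2 = m30 := by
    linear_combination m30 * c3 - q03 + e5 + e6 / 2
  have hS : (m10 + m20 / 2 + m30 + r) * (4 * r - 1) = 0 := by
    linear_combination f1 + f2 / 2 + f3 + r * c0
  have hr4 : r = 1 / 4 := by
    rcases mul_eq_zero.1 hS with h | h
    · exfalso; have : 0 < m10 + m20 / 2 + m30 + r := by positivity
      linarith
    · linarith
  subst hr4
  have a1 : m10 = 1 / 4 := by linarith
  have a2 : m20 = 1 / 2 := by linarith
  have a3 : m30 = 1 / 4 := by linarith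
  subst a1 a2 a3
  refine ⟨rfl, ?_, ?_, rfl, rfl⟩ <;> linarith

theorem moduli (B : Matrix (Fin 4) (Fin 4) ℂ) (hU : Bᴴ * B = 1) (H : Pencil (diagonal dg) B)
    (hp : B 0 1 * B 1 0 ≠ 0) :
    normSq (B 1 0) = 1 / 4 ∧ normSq (B 2 1) = 1 / 4 ∧ normSq (B 3 2) = 1 / 4 ∧
      normSq (B 3 0) = 1 / 4 ∧ normSq (B 2 0) = 1 / 2 := by
  obtain ⟨⟨d0, d1, d2, d3⟩, ⟨p03, p12, p23, p02, p13⟩, ⟨t3, t2, t1, t0⟩, hdet⟩ := conds B H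
  have hne : ∀ a b : ℂ, a * b = B 0 1 * B 1 0 → 0 < normSq a ∧ 0 < normSq b := by
    intro a b h
    have : a * b ≠ 0 := by rw [h]; exact hp
    exact ⟨normSq_pos.2 (left_ne_zero_of_mul this), normSq_pos.2 (right_ne_zero_of_mul this)⟩
  have hne' : ∀ a b : ℂ, a * b = -2 * (B 0 1 * B 1 0) → 0 < normSq a ∧ 0 < normSq b := by
    intro a b h
    have : a * b ≠ 0 := by rw [h]; exact mul_ne_zero (by norm_num) hp
    exact ⟨normSq_pos.2 (left_ne_zero_of_mul this), normSq_pos.2 (right_ne_zero_of_mul this)⟩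
  have hr : 0 < ‖B 0 1 * B 1 0‖ := norm_pos_iff.2 hp
  have hq : ∀ a b : ℂ, a * b = B 0 1 * B 1 0 → normSq a * normSq b = ‖B 0 1 * B 1 0‖ ^ 2 := by
    intro a b h
    rw [← normSq_mul, h, normSq_eq_norm_sq]
  have hq' : ∀ a b : ℂ, a * b = -2 * (B 0 1 * B 1 0) →
      normSq a * normSq b = 4 * ‖B 0 1 * B 1 0‖ ^ 2 := by
    intro a b h
    rw [← normSq_mul, h, normSq_mul, normSq_eq_norm_sq (B 0 1 * B 1 0), normSq_neg]
    norm_num [normSq_ofNat]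
  have ht : ∀ a b c a' b' c' : ℂ, a * b * c + a' * b' * c' = 0 →
      normSq a * normSq b * normSq c = normSq a' * normSq b' * normSq c' := by
    intro a b c a' b' c' h
    rw [← normSq_mul, ← normSq_mul, ← normSq_mul, ← normSq_mul, eq_neg_of_add_eq_zero_left h,
      normSq_neg]
  have hc : ∀ k, normSq (B 0 k) + normSq (B 1 k) + normSq (B 2 k) + normSq (B 3 k) = 1 := by
    intro k
    have h := congrFun (congrFun hU k) k
    rw [mul_apply, Fin.sum_univ_four, one_apply_eq] at h
    simp only [conjTranspose_apply, ← starRingEnd_apply, ← normSq_eq_conj_mul_self] at h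
    exact_mod_cast h
  have c0 := hc 0
  have c1 := hc 1
  have c2 := hc 2
  have c3 := hc 3
  rw [d0, normSq_zero] at c0
  rw [d1, normSq_zero] at c1
  rw [d2, normSq_zero] at c2
  rw [d3, normSq_zero] at c3
  exact perron _ (normSq (B 0 1)) (normSq (B 0 2)) (normSq (B 0 3)) (normSq (B 1 0))
    (normSq (B 1 2)) (normSq (B 1 3)) (normSq (B 2 0)) (normSq (B 2 1)) (normSq (B 2 3))
    (normSq (B 3 0)) (normSq (B 3 1)) (normSq (B 3 2)) hr
    (hne _ _ rfl).2 (hne _ _ p12).1 (hne' _ _ p13).1 (hne' _ _ p02).2 (hne _ _ p12).2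
    (hne _ _ p23).1 (hne _ _ p03).2 (hne' _ _ p13).2 (hne _ _ p23).2
    (hq _ _ rfl) (hq _ _ p12) (hq _ _ p23) (hq _ _ p03) (hq' _ _ p02) (hq' _ _ p13)
    (ht _ _ _ _ _ _ t3) (ht _ _ _ _ _ _ t2) (ht _ _ _ _ _ _ t1)
    (by linarith) (by linarith) (by linarith) (by linarith)

/-- The circulant matrix that appears in the second case. -/
def circ (p g : ℂ) : Matrix (Fin 4) (Fin 4) ℂ :=
  !![0, 2 * p, g, 1 / 2; 1 / 2, 0, 2 * p, g; g, 1 / 2, 0, 2 * p; 2 * p, g, 1 / 2, 0]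

theorem core (B : Matrix (Fin 4) (Fin 4) ℂ) (hU : Bᴴ * B = 1) (H : Pencil (diagonal dg) B)
    (hp : B 0 1 * B 1 0 ≠ 0) (b10 : B 1 0 = 1 / 2) (b21 : B 2 1 = 1 / 2) (b32 : B 3 2 = 1 / 2) :
    ∃ p g : ℂ, 16 * p ^ 2 = -1 ∧ g ^ 2 = -2 * p ∧ B = circ p g := by
  obtain ⟨-, -, -, m30, m20⟩ := moduli B hU H hp
  obtain ⟨⟨d0, d1, d2, d3⟩, ⟨p03, p12, p23, p02, p13⟩, ⟨t3, t2, t1, t0⟩, hdet⟩ := conds B H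
  have n30 : star (B 3 0) * B 3 0 = 1 / 4 := by
    rw [← starRingEnd_apply, ← normSq_eq_conj_mul_self, m30]; norm_num
  have n20 : star (B 2 0) * B 2 0 = 1 / 2 := by
    rw [← starRingEnd_apply, ← normSq_eq_conj_mul_self, m20]; norm_num
  have u02 := congrFun (congrFun hU 0) 2
  have u01 := congrFun (congrFun hU 0) 1
  have s2 : star (1 / 2 : ℂ) = 1 / 2 := by
    rw [← starRingEnd_apply]; simp only [map_div₀, map_one, map_ofNat]
  rw [mul_apply, Fin.sum_univ_four] at u02 u01
  simp only [conjTranspose_apply, d0, d1, d2, b10, b21, b32, s2, star_zero] at u02 u01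
  rw [one_apply_ne (by decide)] at u02 u01
  obtain ⟨p, hpp⟩ : ∃ p, p = B 0 1 * B 1 0 := ⟨_, rfl⟩
  rw [← hpp] at hp p03 p12 p23 p02 p13
  have b01 : B 0 1 = 2 * p := by rw [b10] at hpp; linear_combination -2 * hpp
  have b12 : B 1 2 = 2 * p := by rw [b21] at p12; linear_combination 2 * p12
  have b23 : B 2 3 = 2 * p := by rw [b32] at p23; linear_combination 2 * p23
  obtain ⟨g, hg⟩ : ∃ g, g = B 2 0 := ⟨_, rfl⟩
  rw [b01, b12, b21, b10, ← hg] at t3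
  rw [← hg] at p02 n20 u01
  rw [b12] at u02
  have b02 : B 0 2 = -16 * p ^ 2 * g := by linear_combination 4 * t3
  rw [b02] at p02
  have w : 8 * p * g ^ 2 = 1 := by
    apply mul_left_cancel₀ hp
    linear_combination -p02 / 2
  have hu : 8 * p * B 3 0 = -1 := by
    linear_combination 8 * B 3 0 * u02 - 4 * n30
  have b30 : B 3 0 = -g ^ 2 := by
    apply mul_left_cancel₀ hp
    linear_combination hu / 8 + w / 8
  have hg0 : g ≠ 0 := by
    rintro rfl; norm_num at w
  have b31 : B 3 1 = g := by
    apply mul_left_cancel₀ hg0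
    linear_combination 4 * g * B 3 0 * u01 - 2 * B 3 0 * n20 - 4 * g * B 3 1 * n30 - b30
  have b03 : B 0 3 = -8 * p ^ 2 := by
    linear_combination (-8 * p) * p03 + B 0 3 * hu
  have b13 : B 1 3 = -16 * p ^ 2 * g := by
    apply mul_left_cancel₀ hg0
    rw [b31] at p13
    linear_combination p13 + 2 * p * w
  have h16 : 16 * p ^ 2 = -1 := by
    rw [d0, d1, d2, d3, b01, b02, b03, b10, b12, b13, ← hg, b21, b23, b30, b31, b32] at hdet
    linear_combination hdet - p ^ 2 * (6 * (8 * p * g ^ 2) + 14) * w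
  have hg2 : g ^ 2 = -2 * p := by
    linear_combination g ^ 2 * h16 - 2 * p * w
  refine ⟨p, g, h16, hg2, ?_⟩
  have b02' : B 0 2 = g := by linear_combination b02 - g * h16
  have b13' : B 1 3 = g := by linear_combination b13 - g * h16
  have b03' : B 0 3 = 1 / 2 := by linear_combination b03 - h16 / 2
  have b30' : B 3 0 = 2 * p := by linear_combination b30 - hg2
  ext i j
  fin_cases i <;> fin_cases j <;>
    first
    | exact d0
    | exact d1
    | exact d2
    | exact d3
    | exact b01
    | exact b02'
    | exact b03'
    | exact b10
    | exact b12
    | exact b13'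
    | exact hg.symm
    | exact b21
    | exact b23
    | exact b30'
    | exact b31
    | exact b32

/-- The discrete Fourier matrix. -/
def four : Matrix (Fin 4) (Fin 4) ℂ :=
  !![1/2, 1/2, 1/2, 1/2; 1/2, -I/2, -1/2, I/2; 1/2, -1/2, 1/2, -1/2; 1/2, I/2, -1/2, -I/2]

theorem four_unitary : four * fourᴴ = 1 := by
  ext i j
  rw [mul_apply, Fin.sum_univ_four]
  fin_cases i <;> fin_cases j <;> simp [four, conjTranspose_apply, one_apply] <;>
    apply Complex.ext <;> norm_num

theorem four_dg : four * diagonal dg = shift * four := by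
  ext i j
  rw [mul_diagonal, mul_apply, Fin.sum_univ_four]
  fin_cases i <;> fin_cases j <;> simp [four, shift, dg] <;>
    apply Complex.ext <;> norm_num

theorem four_circ (p g : ℂ) : four * circ p g = diagonal ![1/2 + g + 2 * p,
    -I/2 - g + 2 * p * I, -1/2 + g - 2 * p, I/2 - g - 2 * p * I] * four := by
  have hI := I_mul_I
  ext i j
  rw [diagonal_mul, mul_apply, Fin.sum_univ_four]
  fin_cases i <;> fin_cases j <;> simp [four, circ] <;>
    first
    | ring1
    | linear_combination (p + 1/4) * hI
    | linear_combination (p - 1/4) * hI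
    | linear_combination (-p + 1/4) * hI
    | linear_combination (-p - 1/4) * hI

theorem circ_diag (p g : ℂ) (hp : 16 * p ^ 2 = -1) (hg : g ^ 2 = -2 * p) :
    ∃ σ : Equiv.Perm (Fin 4), (![1/2 + g + 2 * p,
    -I/2 - g + 2 * p * I, -1/2 + g - 2 * p, I/2 - g - 2 * p * I] : Fin 4 → ℂ)
      = fun j => dg (σ j) := by
  have h1 : (4 * p - I) * (4 * p + I) = 0 := by linear_combination hp - I_mul_I
  have hI := I_mul_I
  rcases mul_eq_zero.1 h1 with h | h
  · have hp' : p = I / 4 := by linear_combination h / 4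
    subst hp'
    have h2 : (2 * g - (1 - I)) * (2 * g + (1 - I)) = 0 := by linear_combination 4 * hg - I_mul_I
    rcases mul_eq_zero.1 h2 with h | h
    · have hg' : g = (1 - I) / 2 := by linear_combination h / 2
      subst hg'
      refine ⟨⟨![0,2,3,1], ![0,3,1,2], by decide, by decide⟩, ?_⟩
      funext j
      fin_cases j <;> simp [dg] <;> apply Complex.ext <;> norm_num
    · have hg' : g = -(1 - I) / 2 := by linear_combination h / 2
      subst hg'
      refine ⟨⟨![1,3,2,0], ![3,0,2,1], by decide, by decide⟩, ?_⟩
      funext j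
      fin_cases j <;> simp [dg] <;> apply Complex.ext <;> norm_num
  · have hp' : p = -I / 4 := by linear_combination h / 4
    subst hp'
    have h2 : (2 * g - (1 + I)) * (2 * g + (1 + I)) = 0 := by linear_combination 4 * hg - I_mul_I
    rcases mul_eq_zero.1 h2 with h | h
    · have hg' : g = (1 + I) / 2 := by linear_combination h / 2
      subst hg'
      refine ⟨⟨![0,3,1,2], ![0,2,3,1], by decide, by decide⟩, ?_⟩
      funext j
      fin_cases j <;> simp [dg] <;> apply Complex.ext <;> norm_num
    · have hg' : g = -(1 + I) / 2 := by linear_combination h / 2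
      subst hg'
      refine ⟨⟨![3,0,2,1], ![1,3,2,0], by decide, by decide⟩, ?_⟩
      funext j
      fin_cases j <;> simp [dg] <;> apply Complex.ext <;> norm_num

theorem conj_comp (V W M : Matrix (Fin 4) (Fin 4) ℂ) :
    (V * W) * M * (V * W)ᴴ = V * (W * M * Wᴴ) * Vᴴ := by
  simp only [conjTranspose_mul, mul_assoc]

theorem case_nonzero (B : Matrix (Fin 4) (Fin 4) ℂ) (hU : Bᴴ * B = 1)
    (H : Pencil (diagonal dg) B) (hp : B 0 1 * B 1 0 ≠ 0) :
    ∃ P V : Matrix (Fin 4) (Fin 4) ℂ, IsPermMatrix P ∧ V * Vᴴ = 1 ∧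
      V * diagonal dg * Vᴴ = shift ∧ V * B * Vᴴ = Pᵀ * diagonal dg * P := by
  obtain ⟨m10, m21, m32, -, -⟩ := moduli B hU H hp
  have n10 : star (B 1 0) * B 1 0 = 1 / 4 := by
    rw [← starRingEnd_apply, ← normSq_eq_conj_mul_self, m10]; norm_num
  have n21 : star (B 2 1) * B 2 1 = 1 / 4 := by
    rw [← starRingEnd_apply, ← normSq_eq_conj_mul_self, m21]; norm_num
  have n32 : star (B 3 2) * B 3 2 = 1 / 4 := by
    rw [← starRingEnd_apply, ← normSq_eq_conj_mul_self, m32]; norm_num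
  let τ : Fin 4 → ℂ := ![1, 2 * star (B 1 0), 4 * (star (B 1 0) * star (B 2 1)),
    8 * (star (B 1 0) * star (B 2 1) * star (B 3 2))]
  have so : ∀ x : ℂ, star (2 * x) = 2 * star x ∧ star (4 * x) = 4 * star x ∧
      star (8 * x) = 8 * star x := by
    intro x
    simp only [← starRingEnd_apply, map_mul, map_ofNat, and_self]
  have s2 := fun x => (so x).1
  have s4 := fun x => (so x).2.1
  have s8 := fun x => (so x).2.2
  have hτ : ∀ i, τ i * star (τ i) = 1 := by
    intro i
    fin_cases i
    · simp [τ]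
    · simp only [τ, Fin.mk_one, cons_val, s2, star_star]; linear_combination 4 * n10
    · simp only [τ, Fin.reduceFinMk, cons_val, s4, star_mul', star_star]
      linear_combination 16 * (star (B 2 1) * B 2 1) * n10 + 4 * n21
    · simp only [τ, Fin.reduceFinMk, cons_val, s8, star_mul', star_star]
      linear_combination 64 * (star (B 2 1) * B 2 1) * (star (B 3 2) * B 3 2) * n10
        + 16 * (star (B 3 2) * B 3 2) * n21 + 4 * n32
  have hV := mono_unitary 1 τ hτ
  have hD : mono 1 τ * diagonal dg * (mono 1 τ)ᴴ = diagonal dg := by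
    ext i j
    rw [mono_conj]
    by_cases h : i = j
    · subst h; simp only [diagonal_apply_eq, Equiv.Perm.coe_one, id]
      linear_combination dg i * hτ i
    · simp [diagonal_apply, h]
  have H' := H.conj hV
  rw [hD] at H'
  have hU' := conj_unitary hU hV
  have hB' := fun i j => mono_conj 1 τ B i j
  simp only [Equiv.Perm.coe_one, id] at hB'
  set B' := mono 1 τ * B * (mono 1 τ)ᴴ with hBdef
  obtain ⟨p, g, hp16, hg2, hC⟩ := core B' hU' H'
    (by
      rw [hB', hB']
      have : τ 0 * B 0 1 * star (τ 1) * (τ 1 * B 1 0 * star (τ 0)) = B 0 1 * B 1 0 := by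
        linear_combination B 0 1 * B 1 0 * (star (τ 1) * τ 1 * hτ 0 + hτ 1)
      rw [this]; exact hp)
    (by
      rw [hB']; simp only [τ, cons_val, star_one]; linear_combination 2 * n10)
    (by
      rw [hB']; simp only [τ, cons_val, s2, star_star]
      linear_combination 8 * (star (B 2 1) * B 2 1) * n10 + 2 * n21)
    (by
      rw [hB']; simp only [τ, cons_val, s4, star_mul', star_star]
      linear_combination 32 * (star (B 2 1) * B 2 1) * (star (B 3 2) * B 3 2) * n10
        + 8 * (star (B 3 2) * B 3 2) * n21 + 2 * n32)
  obtain ⟨σ, hσ⟩ := circ_diag p g hp16 hg2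
  refine ⟨pm σ, four * mono 1 τ, ⟨σ, rfl⟩, ?_, ?_, ?_⟩
  · have := conj_comp four (mono 1 τ) 1
    rw [mul_one, mul_one, hV, mul_one, four_unitary] at this
    exact this
  · rw [conj_comp, hD, four_dg, mul_assoc, four_unitary, mul_one]
  · rw [conj_comp, ← hBdef, hC, four_circ, mul_assoc, four_unitary, mul_one, pm_conj, hσ]

theorem stmt_5
    (A₄ Bhat : Matrix (Fin 4) (Fin 4) ℂ)
    (hA₄ : A₄ = Matrix.diagonal (fun j : Fin 4 => Complex.I ^ (j : ℕ)))
    (hBhat : Bhat = Matrix.of fun j k : Fin 4 => if j = k + 1 then 1 else 0)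
    (A B : Matrix (Fin 4) (Fin 4) ℂ)
    (hA : A * Aᴴ = Aᴴ * A)
    (hB : ‖Matrix.toEuclideanCLM (𝕜 := ℂ) B‖ = 1)
    (hspec : {p : ℂ × ℂ × ℂ |
        (p.1 • A + p.2.1 • B + p.2.2 • (A * B) - 1).det = 0} =
      {p : ℂ × ℂ × ℂ | p.1 ^ 4 + p.2.1 ^ 4 - p.2.2 ^ 4 = 1}) :
    ∃ P U : Matrix (Fin 4) (Fin 4) ℂ, IsPermMatrix P ∧ U * Uᴴ = 1 ∧
      ((U * A * Uᴴ = Pᵀ * A₄ * P ∧ U * B * Uᴴ = Bhat) ∨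
       (U * A * Uᴴ = Bhat ∧ U * B * Uᴴ = Pᵀ * A₄ * P)) := by
  have hch := charpoly_pencil A B hspec
  have hpen : Pencil A B := by
    intro x y z
    have h := congrArg (Polynomial.eval 1) (hch x y z)
    rw [eval_charpoly] at h
    simp only [Polynomial.eval_sub, Polynomial.eval_pow, Polynomial.eval_X, Polynomial.eval_C,
      one_pow, map_one] at h
    rw [← h, ← neg_sub, det_neg]
    norm_num
  have hA4 : A₄ = diagonal dg := by
    rw [hA₄]
    congr 1
    funext j
    fin_cases j <;> simp [dg, I_pow_three]
  have hBs : Bhat = shift := hBhat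
  have hdg4 : ∀ j, dg j ^ 4 = 1 := by
    intro j
    fin_cases j <;> simp [dg, I_pow_four] <;> norm_num
  have hinj : Function.Injective dg := by
    intro i j h
    have h' := congrArg Complex.re h
    have h'' := congrArg Complex.im h
    fin_cases i <;> fin_cases j <;> first | rfl | (exfalso; norm_num [dg] at h'; done) |
      (exfalso; norm_num [dg] at h''; done)
  obtain ⟨W, hW, hAW⟩ := diag_normal A hA dg hinj (by
    intro j
    have h := congrArg (Polynomial.eval (dg j)) (hch 1 0 0)
    rw [eval_charpoly] at h
    simp only [one_smul, zero_smul, add_zero] at h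
    rw [h]
    simp [hdg4])
  have hB4 : B ^ 4 = 1 := by
    have h := aeval_self_charpoly B
    have h' := hch 0 1 0
    simp only [one_smul, zero_smul, add_zero, zero_add] at h'
    rw [h'] at h
    simp at h
    exact sub_eq_zero.1 h
  have hBU := unitary_of_contraction B hB hB4
  have hV0 : Wᴴ * Wᴴᴴ = 1 := by rw [conjTranspose_conjTranspose, hW]
  have hAd : Wᴴ * A * Wᴴᴴ = diagonal dg := by
    rw [conjTranspose_conjTranspose, mul_assoc, hAW, ← mul_assoc, hW, one_mul]
  have H0 := hpen.conj hV0
  have U0 := conj_unitary hBU hV0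
  rw [hAd] at H0
  have hUU : ∀ V : Matrix (Fin 4) (Fin 4) ℂ, V * Vᴴ = 1 → (V * Wᴴ) * (V * Wᴴ)ᴴ = 1 := by
    intro V hV
    have := conj_comp V Wᴴ 1
    rw [mul_one, mul_one, hV0, mul_one, hV] at this
    exact this
  rw [hA4, hBs]
  by_cases hp : (Wᴴ * B * Wᴴᴴ) 0 1 * (Wᴴ * B * Wᴴᴴ) 1 0 = 0
  · obtain ⟨P, V, hP, hV, h1, h2⟩ := case_zero _ U0 H0 hp
    refine ⟨P, V * Wᴴ, hP, hUU V hV, Or.inl ⟨?_, ?_⟩⟩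
    · rw [conj_comp, hAd, h1]
    · rw [conj_comp, h2]
  · obtain ⟨P, V, hP, hV, h1, h2⟩ := case_nonzero _ U0 H0 hp
    refine ⟨P, V * Wᴴ, hP, hUU V hV, Or.inr ⟨?_, ?_⟩⟩
    · rw [conj_comp, hAd, h1]
    · rw [conj_comp, h2]
end
end
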